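/- Let A be a (possibly noncommutative) ring and let h be an element of the center of A such that h^N = 0 for some natural number N and such that the quotient ring A₀ := A/(h) by the two-sided ideal generated by h is commutative; let π : A → A₀ be the quotient map. Let S̄ be a multiplicative submonoid of A₀ with 0 ∉ S̄. Then the multiplicative subset S := π⁻¹(S̄) of A satisfies all four Ore conditions: (i) for all a ∈ A and s ∈ S there exist b ∈ A and t ∈ S with t·a = b·s; (ii) for all a ∈ A, if a·s = 0 for some s ∈ S then t·a = 0 for some t ∈ S; (iii) for all b ∈ A and t ∈ S there exist a ∈ A and s ∈ S with t·a = b·s; (iv) for all a ∈ A, if s·a = 0 for some s ∈ S then a·t = 0 for some t ∈ S. -/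

import Mathlib

/- STATEMENT 0:
Let `A` be a (possibly noncommutative) ring and `h` a central element with `h ^ N = 0`
for some `N : ℕ`, such that the quotient `A₀ := A ⧸ (h)` by the two-sided ideal generated
by `h` is commutative.  Since `h` is central, the two-sided ideal generated by `h` is
exactly `{h * y | y : A}`; we encode the quotient by a surjective ring homomorphism
`π : A →+* A₀` onto a commutative ring whose kernel is exactly this ideal.
Given a multiplicative submonoid `S̄` of `A₀` not containing `0`, the preimage
`S = π⁻¹(S̄) = {s : A | π s ∈ S̄}` satisfies the four Ore conditions. -/
theorem stmt_0 {A : Type*} [Ring A] {A₀ : Type*} [CommRing A₀]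
    (h : A) (hcentral : h ∈ Subring.center A) (N : ℕ) (hN : h ^ N = 0)
    (π : A →+* A₀) (hsurj : Function.Surjective π)
    (hker : ∀ x : A, π x = 0 ↔ ∃ y : A, x = h * y)
    (Sbar : Submonoid A₀) (hSbar : (0 : A₀) ∉ Sbar) :
    -- (i) for all a ∈ A and s ∈ S there exist b ∈ A and t ∈ S with t·a = b·s
    (∀ a s : A, π s ∈ Sbar → ∃ b t : A, π t ∈ Sbar ∧ t * a = b * s) ∧
    -- (ii) for all a ∈ A, if a·s = 0 for some s ∈ S then t·a = 0 for some t ∈ S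
    (∀ a : A, (∃ s : A, π s ∈ Sbar ∧ a * s = 0) → ∃ t : A, π t ∈ Sbar ∧ t * a = 0) ∧
    -- (iii) for all b ∈ A and t ∈ S there exist a ∈ A and s ∈ S with t·a = b·s
    (∀ b t : A, π t ∈ Sbar → ∃ a s : A, π s ∈ Sbar ∧ t * a = b * s) ∧
    -- (iv) for all a ∈ A, if s·a = 0 for some s ∈ S then a·t = 0 for some t ∈ S
    (∀ a : A, (∃ s : A, π s ∈ Sbar ∧ s * a = 0) → ∃ t : A, π t ∈ Sbar ∧ a * t = 0) := by
  have hc : ∀ x : A, x * h = h * x := fun x => Subring.mem_center_iff.mp hcentral x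
  have hcp : ∀ (n : ℕ) (x : A), x * h ^ n = h ^ n * x := fun n x =>
    ((show Commute x h from hc x).pow_right n).eq
  have hcomm : ∀ x y : A, ∃ z : A, x * y = y * x + h * z := by
    intro x y
    obtain ⟨z, hz⟩ := (hker (x * y - y * x)).1 (by simp [mul_comm])
    exact ⟨z, by rw [← hz]; abel⟩
  have hpow : ∀ s : A, π s ∈ Sbar → π (s ^ N) ∈ Sbar := by
    intro s hs
    rw [map_pow]
    exact pow_mem hs N
  refine ⟨?_, ?_, ?_, ?_⟩
  · intro a s hs
    have key : ∀ n : ℕ, ∃ b y : A, s ^ n * a = b * s + h ^ n * y := by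
      intro n
      induction n with
      | zero => exact ⟨0, a, by simp⟩
      | succ n ih =>
        obtain ⟨b, y, e⟩ := ih
        obtain ⟨z, hz⟩ := hcomm s y
        refine ⟨s * b + h ^ n * y, z, ?_⟩
        rw [pow_succ' s, mul_assoc, e, mul_add, ← mul_assoc s (h ^ n), hcp, mul_assoc, hz, pow_succ]
        noncomm_ring
    obtain ⟨b, y, e⟩ := key N
    exact ⟨b, s ^ N, hpow s hs, by rw [e, hN]; simp⟩
  · rintro a ⟨s, hs, has⟩
    have key : ∀ n : ℕ, ∃ y : A, s ^ n * a = h ^ n * y := by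
      intro n
      induction n with
      | zero => exact ⟨a, by simp⟩
      | succ n ih =>
        obtain ⟨y, e⟩ := ih
        obtain ⟨z, hz⟩ := hcomm s y
        have h0 : h ^ n * (y * s) = 0 := by
          rw [← mul_assoc, ← e, mul_assoc, has, mul_zero]
        refine ⟨z, ?_⟩
        rw [pow_succ' s, mul_assoc, e, ← mul_assoc s (h ^ n), hcp, mul_assoc, hz, mul_add, h0,
          zero_add, pow_succ, mul_assoc]
    obtain ⟨y, e⟩ := key N
    exact ⟨s ^ N, hpow s hs, by rw [e, hN]; simp⟩
  · intro a s hs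
    have key : ∀ n : ℕ, ∃ b y : A, a * s ^ n = s * b + h ^ n * y := by
      intro n
      induction n with
      | zero => exact ⟨0, a, by simp⟩
      | succ n ih =>
        obtain ⟨b, y, e⟩ := ih
        obtain ⟨z, hz⟩ := hcomm y s
        refine ⟨b * s + h ^ n * y, z, ?_⟩
        rw [pow_succ s, ← mul_assoc, e, add_mul, mul_assoc (h ^ n), hz, mul_add s,
          ← mul_assoc s (h ^ n), hcp, pow_succ]
        noncomm_ring
    obtain ⟨b, y, e⟩ := key N
    exact ⟨b, s ^ N, hpow s hs, by rw [e, hN]; simp⟩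
  · rintro a ⟨s, hs, has⟩
    have key : ∀ n : ℕ, ∃ y : A, a * s ^ n = h ^ n * y := by
      intro n
      induction n with
      | zero => exact ⟨a, by simp⟩
      | succ n ih =>
        obtain ⟨y, e⟩ := ih
        obtain ⟨z, hz⟩ := hcomm y s
        have h0 : h ^ n * (s * y) = 0 := by
          rw [← mul_assoc, ← hcp, mul_assoc, ← e, ← mul_assoc, has, zero_mul]
        refine ⟨z, ?_⟩
        rw [pow_succ s, ← mul_assoc, e, mul_assoc, hz, mul_add, h0,
          zero_add, pow_succ, mul_assoc]
    obtain ⟨y, e⟩ := key N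
    exact ⟨s ^ N, hpow s hs, by rw [e, hN]; simp⟩
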